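/- Let k be a positive integer, let G be a finite simple graph, let I ⊆ V(G), let P be an I-connected path decomposition of G of width at most k−1, and let S and S' be bottlenecks of G with S ⊊ S'. If P is S'-structured, then either I(S,P) ∩ I(S',P) = ∅ or I(S',P) ⊆ I(S,P). -/

import Mathlib

/-!
Call `α, β` the ends of `I(S,P)` and `α', β'` those of `I(S',P)`.

First, a bottleneck `S` has an in-branch (`exists_inBranch`). Let `a` be the largest index at
which a vertex of `S` first appears and `b` the smallest index at which a vertex of `S` last
appears. The bags `X a` and `X b` have at most `k` vertices each, so some `S`-branch `H` avoids
both. As `H` is connected and is adjacent to every vertex of `S`, it lives strictly between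
`a` and `b`, where every bag contains `S`.

Now distinguish two cases.

* Some in-branch `H` of `S` contains a vertex of `S'`. Every `S'`-branch is connected, avoids `S`
  and has a neighbor in `H`, so it is contained in `H`. Hence `I(S',P) ⊆ [a(H), b(H)] ⊆ I(S,P)`.
* No in-branch of `S` meets `S'`. Then every in-branch `H` of `S` is a component of `G - S'` with
  `N(H) = S ≠ S'`, so it waits in `I(S',P)`. The in-branches attaining `α` and `β` cannot appear
  or disappear inside `I(S',P)`, so `α ∉ (α', β']` and `β ∉ [α', β')`, which gives the dichotomy.
-/

open SimpleGraph

variable {V : Type*}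

/-- `N_G(Y)`: the set of vertices outside `Y` having a neighbor in `Y`. -/
def nbhdSet (G : SimpleGraph V) (Y : Set V) : Set V :=
  {v | v ∉ Y ∧ ∃ u ∈ Y, G.Adj u v}

/-- `C` is a connected component of the subgraph of `G` induced by `U`. -/
def IsCompIn (G : SimpleGraph V) (U C : Set V) : Prop :=
  C.Nonempty ∧ C ⊆ U ∧ (G.induce C).Connected ∧
    ∀ u ∈ C, ∀ v ∈ U, G.Adj u v → v ∈ C

/-- `C` is a connected component of `G - S`. -/
def IsCompOf (G : SimpleGraph V) (S C : Set V) : Prop :=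
  IsCompIn G Sᶜ C

/-- `C` is an `S`-branch: a connected component of `G - S` with `N_G(C) = S`. -/
def IsBranch (G : SimpleGraph V) (S C : Set V) : Prop :=
  IsCompOf G S C ∧ nbhdSet G C = S

/-- `S` is a bottleneck (for the width parameter `k`): a nonempty set with
at least `2k+1` `S`-branches. -/
def IsBottleneck (G : SimpleGraph V) (k : ℕ) (S : Set V) : Prop :=
  S.Nonempty ∧ 2 * k + 1 ≤ {C : Set V | IsBranch G S C}.ncard

/-- `(X 0, …, X (l-1))` is a path decomposition of `G`. -/
def IsPathDecomp (G : SimpleGraph V) (l : ℕ) (X : ℕ → Set V) : Prop :=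
  (∀ v, ∃ i < l, v ∈ X i) ∧
  (∀ u v, G.Adj u v → ∃ i < l, u ∈ X i ∧ v ∈ X i) ∧
  (∀ i j m, i ≤ j → j ≤ m → m < l → X i ∩ X m ⊆ X j)

/-- The width of a path decomposition: the maximum bag size minus one. -/
noncomputable def pdWidth (l : ℕ) (X : ℕ → Set V) : ℕ :=
  ((Finset.range l).sup fun i => (X i).ncard) - 1

/-- The set of indices of bags meeting the vertex set `C`. -/
def supp (l : ℕ) (X : ℕ → Set V) (C : Set V) : Set ℕ :=
  {t | t < l ∧ (C ∩ X t).Nonempty}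

/-- `a(C)`: the first index of a bag meeting `C`. -/
noncomputable def firstIdx (l : ℕ) (X : ℕ → Set V) (C : Set V) : ℕ :=
  sInf (supp l X C)

/-- `b(C)`: the last index of a bag meeting `C`. -/
noncomputable def lastIdx (l : ℕ) (X : ℕ → Set V) (C : Set V) : ℕ :=
  sSup (supp l X C)

/-- `C` is an in-branch of `S` with respect to the decomposition:
an `S`-branch with `S ⊆ X (a C)` and `S ⊆ X (b C)`. -/
def IsInBranch (G : SimpleGraph V) (l : ℕ) (X : ℕ → Set V) (S C : Set V) : Prop :=
  IsBranch G S C ∧ S ⊆ X (firstIdx l X C) ∧ S ⊆ X (lastIdx l X C)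

/-- `α(S)`: the minimum of `a(H)` over in-branches `H` of `S`. -/
noncomputable def botStart (G : SimpleGraph V) (l : ℕ) (X : ℕ → Set V) (S : Set V) : ℕ :=
  sInf {i | ∃ C, IsInBranch G l X S C ∧ i = firstIdx l X C}

/-- `β(S)`: the maximum of `b(H)` over in-branches `H` of `S`. -/
noncomputable def botEnd (G : SimpleGraph V) (l : ℕ) (X : ℕ → Set V) (S : Set V) : ℕ :=
  sSup {i | ∃ C, IsInBranch G l X S C ∧ i = lastIdx l X C}

/-- The interval `I(S,P) = [α(S), β(S)]` of a bottleneck `S`. -/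
noncomputable def botInterval (G : SimpleGraph V) (l : ℕ) (X : ℕ → Set V) (S : Set V) : Set ℕ :=
  Set.Icc (botStart G l X S) (botEnd G l X S)

/-- A pre-branch of `S`. -/
def IsPreBranch (G : SimpleGraph V) (l : ℕ) (X : ℕ → Set V) (S C : Set V) : Prop :=
  IsBranch G S C ∧ ¬ IsInBranch G l X S C ∧ firstIdx l X C < botStart G l X S

/-- A post-branch of `S`. -/
def IsPostBranch (G : SimpleGraph V) (l : ℕ) (X : ℕ → Set V) (S C : Set V) : Prop :=
  IsBranch G S C ∧ ¬ IsInBranch G l X S C ∧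
    botStart G l X S ≤ firstIdx l X C ∧ botEnd G l X S < lastIdx l X C

/-- `C` waits in the interval `[i, j]` of the decomposition. -/
def WaitsIn (X : ℕ → Set V) (C : Set V) (i j : ℕ) : Prop :=
  ∀ t, i ≤ t → t ≤ j → C ∩ X t = C ∩ X i

/-- The decomposition is `S`-structured: every component of `G - S` that is not an
`S`-branch, and every pre- or post-branch of `S`, waits in `I(S,P)`. -/
def IsStructured (G : SimpleGraph V) (l : ℕ) (X : ℕ → Set V) (S : Set V) : Prop :=
  ∀ C : Set V,
    ((IsCompOf G S C ∧ ¬ IsBranch G S C) ∨ IsPreBranch G l X S C ∨ IsPostBranch G l X S C) →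
    WaitsIn X C (botStart G l X S) (botEnd G l X S)

/-- The decomposition is `I`-connected: every connected component of the subgraph
induced by any prefix of bags contains a vertex of `I`. -/
def IsIConn (G : SimpleGraph V) (l : ℕ) (X : ℕ → Set V) (I : Set V) : Prop :=
  ∀ i < l, ∀ C : Set V, IsCompIn G {v | ∃ j ≤ i, v ∈ X j} C → (C ∩ I).Nonempty

/-- Propagation of a predicate along the edges of a connected vertex set. -/
lemma connected_propagate {G : SimpleGraph V} {C : Set V} (hC : (G.induce C).Connected)
    (Q : V → Prop) (hQ : ∀ x ∈ C, ∀ y ∈ C, G.Adj x y → Q x → Q y)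
    {u v : V} (hu : u ∈ C) (hv : v ∈ C) (h : Q u) : Q v := by
  obtain ⟨w⟩ := hC.preconnected ⟨u, hu⟩ ⟨v, hv⟩
  have key : ∀ (x y : C), (G.induce C).Walk x y → Q x → Q y := by
    intro x y w
    induction w with
    | nil => exact id
    | cons hadj _ ih => exact fun hx => ih (hQ _ (Subtype.prop _) _ (Subtype.prop _) hadj hx)
  exact key _ _ w h

lemma subset_of_connected {G : SimpleGraph V} {U C D : Set V} (hD : IsCompIn G U D)
    (hC : (G.induce C).Connected) (hCU : C ⊆ U) (hne : (C ∩ D).Nonempty) : C ⊆ D := by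
  obtain ⟨u, huC, huD⟩ := hne
  intro v hv
  exact connected_propagate hC (· ∈ D) (fun x _ y hy hxy hx => hD.2.2.2 x hx y (hCU hy) hxy)
    huC hv huD

lemma comp_eq {G : SimpleGraph V} {U C D : Set V} (hC : IsCompIn G U C) (hD : IsCompIn G U D)
    (hne : (C ∩ D).Nonempty) : C = D :=
  Set.Subset.antisymm (subset_of_connected hD hC.2.2.1 hC.2.1 hne)
    (subset_of_connected hC hD.2.2.1 hD.2.1 (by rwa [Set.inter_comm]))

/-- The bags meeting a connected vertex set form an interval. -/
lemma meets_between {G : SimpleGraph V} {l : ℕ} {X : ℕ → Set V} (hP : IsPathDecomp G l X)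
    {C : Set V} (hC : (G.induce C).Connected) {u v : V} (hu : u ∈ C) (hv : v ∈ C)
    {i t j : ℕ} (hit : i ≤ t) (htj : t ≤ j) (hj : j < l) (hui : u ∈ X i) (hvj : v ∈ X j) :
    (C ∩ X t).Nonempty := by
  by_contra hemp
  have hno : ∀ x ∈ C, x ∉ X t := fun x hx hxt => hemp ⟨x, hx, hxt⟩
  have : ∃ i ≤ t, v ∈ X i := by
    refine connected_propagate hC (fun x => ∃ i ≤ t, x ∈ X i) ?_ hu hv ⟨i, hit, hui⟩
    rintro x hx y hy hxy ⟨i, hi, hxi⟩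
    obtain ⟨m, hm, hxm, hym⟩ := hP.2.1 x y hxy
    rcases le_total m t with h | h
    · exact ⟨m, h, hym⟩
    · exact absurd (hP.2.2 i t m hi h hm ⟨hxi, hxm⟩) (hno x hx)
  obtain ⟨i', hi', hvi'⟩ := this
  exact hno v hv (hP.2.2 i' t j hi' htj hj ⟨hvi', hvj⟩)

lemma supp_nonempty {G : SimpleGraph V} {l : ℕ} {X : ℕ → Set V} (hP : IsPathDecomp G l X)
    {C : Set V} (hC : C.Nonempty) : (supp l X C).Nonempty := by
  obtain ⟨v, hv⟩ := hC
  obtain ⟨i, hi, hvi⟩ := hP.1 v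
  exact ⟨i, hi, v, hv, hvi⟩

lemma supp_bddAbove (l : ℕ) (X : ℕ → Set V) (C : Set V) : BddAbove (supp l X C) :=
  ⟨l, fun _ ht => ht.1.le⟩

lemma firstIdx_mem {G : SimpleGraph V} {l : ℕ} {X : ℕ → Set V} (hP : IsPathDecomp G l X)
    {C : Set V} (hC : C.Nonempty) : firstIdx l X C ∈ supp l X C :=
  Nat.sInf_mem (supp_nonempty hP hC)

lemma lastIdx_mem {G : SimpleGraph V} {l : ℕ} {X : ℕ → Set V} (hP : IsPathDecomp G l X)
    {C : Set V} (hC : C.Nonempty) : lastIdx l X C ∈ supp l X C :=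
  Nat.sSup_mem (supp_nonempty hP hC) (supp_bddAbove l X C)

lemma firstIdx_le {l : ℕ} {X : ℕ → Set V} {C : Set V} {t : ℕ} (ht : t ∈ supp l X C) :
    firstIdx l X C ≤ t := Nat.sInf_le ht

lemma le_lastIdx {l : ℕ} {X : ℕ → Set V} {C : Set V} {t : ℕ} (ht : t ∈ supp l X C) :
    t ≤ lastIdx l X C := le_csSup (supp_bddAbove l X C) ht

lemma supp_mono {l : ℕ} {X : ℕ → Set V} {C D : Set V} (h : C ⊆ D) : supp l X C ⊆ supp l X D :=
  fun _ ht => ⟨ht.1, ht.2.mono (Set.inter_subset_inter_left _ h)⟩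

/-- Branches are pairwise disjoint, so at most `|Y|` of them meet a set `Y`. -/
lemma ncard_branches_meeting [Fintype V] (G : SimpleGraph V) (S Y : Set V) :
    {C : Set V | IsBranch G S C ∧ (C ∩ Y).Nonempty}.ncard ≤ Y.ncard := by
  rcases Set.eq_empty_or_nonempty Y with rfl | ⟨y, -⟩
  · simp
  have : Nonempty V := ⟨y⟩
  choose! f hf using fun (C : Set V) (h : IsBranch G S C ∧ (C ∩ Y).Nonempty) => h.2
  refine Set.ncard_le_ncard_of_injOn f (fun C hC => (hf C hC).2) ?_ Y.toFinite
  intro C hC D hD hCD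
  exact comp_eq hC.1.1 hD.1.1 ⟨f C, (hf C hC).1, hCD ▸ (hf D hD).1⟩

lemma bag_ncard_le {k l : ℕ} (hk : 1 ≤ k) {X : ℕ → Set V} (hw : pdWidth l X ≤ k - 1) {i : ℕ}
    (hi : i < l) : (X i).ncard ≤ k := by
  have h : (X i).ncard ≤ (Finset.range l).sup fun i => (X i).ncard :=
    Finset.le_sup (f := fun i => (X i).ncard) (Finset.mem_range.2 hi)
  unfold pdWidth at hw
  omega

lemma exists_inBranch [Fintype V] {k : ℕ} (hk : 1 ≤ k) {G : SimpleGraph V} {l : ℕ}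
    {X : ℕ → Set V} (hP : IsPathDecomp G l X) (hw : pdWidth l X ≤ k - 1) {S : Set V}
    (hS : IsBottleneck G k S) : ∃ C, IsInBranch G l X S C := by
  obtain ⟨s₀, hs₀, hmax⟩ := Set.exists_max_image S (fun s => firstIdx l X {s}) S.toFinite hS.1
  obtain ⟨s₁, hs₁, hmin⟩ := Set.exists_min_image S (fun s => lastIdx l X {s}) S.toFinite hS.1
  have hfirst : ∀ s : V, firstIdx l X {s} < l ∧ s ∈ X (firstIdx l X {s}) := fun s => by
    obtain ⟨h, x, rfl, hx⟩ := firstIdx_mem hP (Set.singleton_nonempty s)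
    exact ⟨h, hx⟩
  have hlast : ∀ s : V, lastIdx l X {s} < l ∧ s ∈ X (lastIdx l X {s}) := fun s => by
    obtain ⟨h, x, rfl, hx⟩ := lastIdx_mem hP (Set.singleton_nonempty s)
    exact ⟨h, hx⟩
  set a := firstIdx l X {s₀} with ha
  set b := lastIdx l X {s₁} with hb
  have hal : a < l := (hfirst s₀).1
  have hbl : b < l := (hlast s₁).1
  -- Every bag with index in `[a, b]` contains `S`.
  have hSX : ∀ t, a ≤ t → t ≤ b → S ⊆ X t := fun t hat htb s hs =>
    hP.2.2 _ t _ ((hmax s hs).trans hat) (htb.trans (hmin s hs)) (hlast s).1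
      ⟨(hfirst s).2, (hlast s).2⟩
  -- At most `2k` branches meet `X a ∪ X b`.
  obtain ⟨C, hC, hCa, hCb⟩ :
      ∃ C, IsBranch G S C ∧ ¬ (C ∩ X a).Nonempty ∧ ¬ (C ∩ X b).Nonempty := by
    by_contra! hcon
    have hsub : {C : Set V | IsBranch G S C} ⊆
        {C | IsBranch G S C ∧ (C ∩ X a).Nonempty} ∪ {C | IsBranch G S C ∧ (C ∩ X b).Nonempty} := by
      intro C hC
      by_cases h : (C ∩ X a).Nonempty
      · exact Or.inl ⟨hC, h⟩
      · exact Or.inr ⟨hC, Set.nonempty_iff_ne_empty.2 fun h' => by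
          have := hcon C hC (Set.not_nonempty_iff_eq_empty.1 h)
          simp_all⟩
    have h1 := Set.ncard_le_ncard hsub (Set.toFinite _)
    have h2 := Set.ncard_union_le {C | IsBranch G S C ∧ (C ∩ X a).Nonempty}
      {C | IsBranch G S C ∧ (C ∩ X b).Nonempty}
    have h3 := ncard_branches_meeting G S (X a)
    have h4 := ncard_branches_meeting G S (X b)
    have h5 := bag_ncard_le hk hw hal
    have h6 := bag_ncard_le hk hw hbl
    have h7 := hS.2
    omega
  have hconn := hC.1.2.2.1
  have hnb : ∀ s ∈ S, ∃ u ∈ C, ∃ m < l, u ∈ X m ∧ s ∈ X m := fun s hs => by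
    rw [← hC.2] at hs
    obtain ⟨-, u, hu, hadj⟩ := hs
    obtain ⟨m, hm, h⟩ := hP.2.1 u s hadj
    exact ⟨u, hu, m, hm, h⟩
  obtain ⟨u₀, hu₀, m₀, hm₀, hum₀, hsm₀⟩ := hnb s₀ hs₀
  obtain ⟨u₁, hu₁, m₁, hm₁, hum₁, hsm₁⟩ := hnb s₁ hs₁
  have ham : a ≤ m₀ := firstIdx_le ⟨hm₀, s₀, rfl, hsm₀⟩
  have hmb : m₁ ≤ b := le_lastIdx ⟨hm₁, s₁, rfl, hsm₁⟩
  have hgt : ∀ t ∈ supp l X C, a ≤ t := by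
    rintro t ⟨_, v, hv, hvt⟩
    by_contra h
    exact hCa (meets_between hP hconn hv hu₀ (by omega) ham hm₀ hvt hum₀)
  have hlt : ∀ t ∈ supp l X C, t ≤ b := by
    rintro t ⟨htl, v, hv, hvt⟩
    by_contra h
    exact hCb (meets_between hP hconn hu₁ hv hmb (by omega) htl hum₁ hvt)
  have hf := firstIdx_mem hP hC.1.1
  have hl := lastIdx_mem hP hC.1.1
  exact ⟨C, hC, hSX _ (hgt _ hf) (hlt _ hf), hSX _ (hgt _ hl) (hlt _ hl)⟩

/-- The in-branches attaining the two ends of the interval of `S`. -/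
lemma exists_extremal {G : SimpleGraph V} {l : ℕ} {X : ℕ → Set V} (hP : IsPathDecomp G l X)
    {S : Set V} (h : ∃ C, IsInBranch G l X S C) :
    (∃ C, IsInBranch G l X S C ∧ botStart G l X S = firstIdx l X C) ∧
    (∃ C, IsInBranch G l X S C ∧ botEnd G l X S = lastIdx l X C) ∧
    ∀ C, IsInBranch G l X S C →
      botStart G l X S ≤ firstIdx l X C ∧ lastIdx l X C ≤ botEnd G l X S := by
  obtain ⟨C, hC⟩ := h
  have hbdd : BddAbove {i | ∃ C, IsInBranch G l X S C ∧ i = lastIdx l X C} := by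
    refine ⟨l, ?_⟩
    rintro _ ⟨D, hD, rfl⟩
    exact (lastIdx_mem hP hD.1.1.1).1.le
  refine ⟨Nat.sInf_mem (s := {i | ∃ C, IsInBranch G l X S C ∧ i = firstIdx l X C}) ⟨_, C, hC, rfl⟩,
    Nat.sSup_mem (s := {i | ∃ C, IsInBranch G l X S C ∧ i = lastIdx l X C}) ⟨_, C, hC, rfl⟩ hbdd,
    fun D hD => ⟨Nat.sInf_le ⟨D, hD, rfl⟩, le_csSup hbdd ⟨D, hD, rfl⟩⟩⟩

/-- An `S'`-branch with `S ⊆ S'` lies inside every component of `G - S` that meets `S'`. -/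
lemma branch_subset {G : SimpleGraph V} {S S' H H' : Set V} (hss : S ⊆ S')
    (hH : IsCompOf G S H) (hmeet : (H ∩ S').Nonempty) (hH' : IsBranch G S' H') : H' ⊆ H := by
  have hsub : H' ⊆ Sᶜ := hH'.1.2.1.trans (Set.compl_subset_compl.2 hss)
  obtain ⟨s, hsH, hsS⟩ := hmeet
  rw [← hH'.2] at hsS
  obtain ⟨-, u, hu, hadj⟩ := hsS
  exact subset_of_connected hH hH'.1.2.2.1 hsub ⟨u, hu, hH.2.2.2 s hsH u (hsub hu) hadj.symm⟩

/-- if an `I`-connected path decomposition of width at most `k-1`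
is `S'`-structured and `S ⊊ S'`, then `I(S) ∩ I(S') = ∅` or `I(S') ⊆ I(S)`. -/
theorem stmt11 [Fintype V] (k : ℕ) (hk : 1 ≤ k) (G : SimpleGraph V) (I : Set V)
    (l : ℕ) (X : ℕ → Set V) (hP : IsPathDecomp G l X) (hIc : IsIConn G l X I)
    (hw : pdWidth l X ≤ k - 1)
    (S S' : Set V) (hS : IsBottleneck G k S) (hS' : IsBottleneck G k S')
    (hss : S ⊂ S') (hstr : IsStructured G l X S') :
    botInterval G l X S ∩ botInterval G l X S' = ∅ ∨
    botInterval G l X S' ⊆ botInterval G l X S := by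
  have hex := exists_inBranch hk hP hw hS
  obtain ⟨⟨H₀, hH₀, hα⟩, ⟨H₁, hH₁, hβ⟩, hext⟩ := exists_extremal hP hex
  -- Without in-branches of `S'`, both ends are `0` by convention and `I(S',P) = {0}`.
  by_cases hex' : ∃ C, IsInBranch G l X S' C
  swap
  · have h0 : botInterval G l X S' = {0} := by
      have hne : ∀ C, ¬ IsInBranch G l X S' C := not_exists.1 hex'
      simp [botInterval, botStart, botEnd, hne]
    rw [h0, Set.inter_singleton_eq_empty, Set.singleton_subset_iff]
    exact (em _).symm
  obtain ⟨⟨H₀', hH₀', hα'⟩, ⟨H₁', hH₁', hβ'⟩, -⟩ := exists_extremal hP hex'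
  by_cases hmeet : ∃ H, IsInBranch G l X S H ∧ (H ∩ S').Nonempty
  · right
    obtain ⟨H, hH, hHS⟩ := hmeet
    have h0 := firstIdx_le (supp_mono (branch_subset hss.1 hH.1.1 hHS hH₀'.1)
      (firstIdx_mem hP hH₀'.1.1.1))
    have h1 := le_lastIdx (supp_mono (branch_subset hss.1 hH.1.1 hHS hH₁'.1)
      (lastIdx_mem hP hH₁'.1.1.1))
    have h2 := hext H hH
    exact Set.Icc_subset_Icc (by omega) (by omega)
  · have hwait : ∀ H, IsInBranch G l X S H →
        WaitsIn X H (botStart G l X S') (botEnd G l X S') := by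
      intro H hH
      refine hstr H (Or.inl ⟨⟨hH.1.1.1, fun v hv hvS => hmeet ⟨H, hH, v, hv, hvS⟩, hH.1.1.2.2.1,
        fun u hu v hv hadj => hH.1.1.2.2.2 u hu v (fun h => hv (hss.1 h)) hadj⟩, fun hB => ?_⟩)
      exact hss.ne (hH.1.2.symm.trans hB.2)
    have hm₀ := firstIdx_mem hP hH₀.1.1.1
    have hm₁ := lastIdx_mem hP hH₁.1.1.1
    have hl' : botEnd G l X S' < l := hβ' ▸ (lastIdx_mem hP hH₁'.1.1.1).1
    rw [← hα] at hm₀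
    rw [← hβ] at hm₁
    rw [or_iff_not_imp_left]
    intro hne
    obtain ⟨t, ⟨ht1, ht2⟩, ht3, ht4⟩ := Set.nonempty_iff_ne_empty.2 hne
    refine Set.Icc_subset_Icc ?_ ?_
    · by_contra! h
      -- `H₀` meets the bag `α`, so it would already meet the bag `α' < α`.
      have hw₀ := hwait H₀ hH₀ _ h.le (ht1.trans ht4)
      have hle := firstIdx_le (C := H₀) (X := X) (l := l) (t := botStart G l X S')
        ⟨by omega, hw₀ ▸ hm₀.2⟩
      omega
    · by_contra! h
      -- `H₁` meets the bag `β`, so it would still meet the bag `β' > β`.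
      have hw₁ := (hwait H₁ hH₁ _ (ht3.trans ht2) h.le).trans
        (hwait H₁ hH₁ _ (ht3.trans ht4) le_rfl).symm
      have hle := le_lastIdx (C := H₁) (X := X) (l := l) (t := botEnd G l X S')
        ⟨hl', hw₁ ▸ hm₁.2⟩
      omega
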